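/- Let m and n be positive integers with m ≥ 1 and n ≥ 2. The number of positive m-divisible non-crossing partitions of type B_n (i.e., elements of NC^B_+(m,n)) equals C((m+1)n - 1, n), and this equals the sum over a = 0, 1, ..., n of C((m+1)n - a - 2, n - a). -/

import Mathlib

/-- A finpartition of `Fin N` (points placed in this order around a circle) is non-crossing
if there are no `a < b < c < d` with `a, c` in one block and `b, d` in a different block. -/
def IsNoncrossing {N : ℕ} (P : Finpartition (Finset.univ : Finset (Fin N))) : Prop :=
  ∀ B ∈ P.parts, ∀ C ∈ P.parts, ∀ a b c d : Fin N,
    a < b → b < c → c < d → a ∈ B → c ∈ B → b ∈ C → d ∈ C → B = C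

/-- On the ground set `Fin (2N)` encoding `1, …, N, -1, …, -N` (index `i < N` encodes `i+1`
and index `i ≥ N` encodes `-(i - N + 1)`), the negation map `i ↦ -i`. -/
def negB (N : ℕ) (x : Fin (2 * N)) : Fin (2 * N) :=
  ⟨(x.val + N) % (2 * N), Nat.mod_lt _ (by have := x.isLt; omega)⟩


/-- Height function attached to `F`. -/
noncomputable def hgt (F : ℤ → ℕ) (x : ℤ) : ℤ :=
  (∑ w ∈ Finset.Ico 0 x, (F w : ℤ)) - (∑ w ∈ Finset.Ico x 0, (F w : ℤ)) - x

lemma hgt_succ (F : ℤ → ℕ) (x : ℤ) : hgt F (x + 1) = hgt F x + F x - 1 := by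
  unfold hgt
  rcases le_or_gt 0 x with h | h
  · have e1 : Finset.Ico 0 (x + 1) = insert x (Finset.Ico 0 x) := by
      ext a; simp only [Finset.mem_Ico, Finset.mem_insert]; omega
    have e2 : Finset.Ico (x + 1) 0 = ∅ :=
      Finset.Ico_eq_empty (by omega)
    have e3 : Finset.Ico x 0 = ∅ :=
      Finset.Ico_eq_empty (by omega)
    rw [e1, e2, e3, Finset.sum_insert (by simp)]
    simp; ring
  · have e1 : Finset.Ico x 0 = insert x (Finset.Ico (x + 1) 0) := by
      ext a; simp only [Finset.mem_Ico, Finset.mem_insert]; omega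
    have e2 : Finset.Ico 0 (x + 1) = ∅ :=
      Finset.Ico_eq_empty (by omega)
    have e3 : Finset.Ico 0 x = ∅ :=
      Finset.Ico_eq_empty (by omega)
    rw [e1, e2, e3, Finset.sum_insert (by simp)]
    simp; ring

lemma hgt_sub (F : ℤ → ℕ) (z y : ℤ) (h : z ≤ y) :
    hgt F y = hgt F z + (∑ w ∈ Finset.Ico z y, (F w : ℤ)) - (y - z) := by
  induction y, h using Int.leInduction with
  | base => simp
  | succ y hy ih =>
    have e1 : Finset.Ico z (y + 1) = insert y (Finset.Ico z y) := by
      ext a; simp only [Finset.mem_Ico, Finset.mem_insert]; omega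
    rw [hgt_succ, ih, e1, Finset.sum_insert (by simp)]
    ring

lemma hgt_per (F : ℤ → ℕ) (N : ℤ) (hF : ∀ x, F (x + N) = F x) (x : ℤ) :
    hgt F (x + N) - hgt F x = hgt F N - hgt F 0 := by
  have step : ∀ x, hgt F (x + 1 + N) - hgt F (x + 1) = hgt F (x + N) - hgt F x := by
    intro x
    have := hgt_succ F (x + N)
    rw [hF] at this
    rw [show x + 1 + N = x + N + 1 by ring, this, hgt_succ]; ring
  induction x using Int.induction_on with
  | zero => simp
  | succ i ih => rw [step, ih]
  | pred i ih =>
    have := step (-(i : ℤ) - 1)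
    rw [sub_add_cancel] at this
    rw [← this, ih]

/-- `x` is the source of `y` for the height function `h`. -/
def IsSrc (h : ℤ → ℤ) (x y : ℤ) : Prop :=
  x ≤ y ∧ h x ≤ h (y + 1) ∧ ∀ z, x < z → z ≤ y → h (y + 1) < h z

/-- Nested source systems. -/
structure GoodS (N : ℤ) (S : ℤ → ℤ → Prop) : Prop where
  le : ∀ x y, S x y → x ≤ y
  lt : ∀ x y, S x y → y < x + N
  uniq : ∀ x x' y, S x y → S x' y → x = x'
  nest : ∀ x y z, S x y → x ≤ z → z ≤ y → ∃ w, S w z ∧ x ≤ w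
  shift : ∀ x y, S x y ↔ S (x + N) (y + N)

open Classical in
/-- Fibre sizes. -/
noncomputable def fib (N : ℤ) (S : ℤ → ℤ → Prop) (x : ℤ) : ℕ :=
  ((Finset.Ico x (x + N)).filter (fun u => S x u)).card

lemma GoodS.refl {N : ℤ} {S} (hS : GoodS N S) {x y : ℤ} (h : S x y) : S x x := by
  obtain ⟨w, hw, hxw⟩ := hS.nest x y x h le_rfl (hS.le _ _ h)
  have := hS.le _ _ hw
  obtain rfl : w = x := by omega
  exact hw

lemma GoodS.le_hgt {N : ℤ} {S} (hS : GoodS N S) {x y : ℤ} (h : S x y) :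
    hgt (fib N S) x ≤ hgt (fib N S) (y + 1) := by
  classical
  have hle := hS.le _ _ h
  rw [hgt_sub _ x (y + 1) (by omega)]
  have hc : (Finset.Ico x (y + 1)).card ≤ ∑ w ∈ Finset.Ico x (y + 1), fib N S w := by
    refine le_trans (Finset.card_le_card (t := (Finset.Ico x (y + 1)).biUnion
      (fun w => (Finset.Ico w (w + N)).filter (fun u => S w u))) ?_) ?_
    · intro u hu
      rw [Finset.mem_Ico] at hu
      obtain ⟨w, hw, hxw⟩ := hS.nest x y u h hu.1 (by omega)
      have h1 := hS.le _ _ hw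
      have h2 := hS.lt _ _ hw
      simp only [Finset.mem_biUnion, Finset.mem_filter, Finset.mem_Ico]
      exact ⟨w, by omega, by omega, hw⟩
    · refine Finset.card_biUnion_le.trans (le_of_eq ?_)
      refine Finset.sum_congr rfl fun w _ => ?_
      unfold fib; congr
  rw [Int.card_Ico] at hc
  have : ((y + 1 - x).toNat : ℤ) ≤ ∑ w ∈ Finset.Ico x (y + 1), (fib N S w : ℤ) := by
    exact_mod_cast hc
  omega

lemma GoodS.hgt_lt {N : ℤ} {S} (hS : GoodS N S) {y z : ℤ} (h : ∀ x, S x y → x < z)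
    (hzy : z ≤ y) : hgt (fib N S) (y + 1) < hgt (fib N S) z := by
  classical
  rw [hgt_sub _ z (y + 1) (by omega)]
  have hc : ∑ w ∈ Finset.Ico z (y + 1), fib N S w ≤ (Finset.Ico z y).card := by
    have e : ∑ w ∈ Finset.Ico z (y + 1), fib N S w = ((Finset.Ico z (y + 1)).biUnion
      (fun w => (Finset.Ico w (w + N)).filter (fun u => S w u))).card := by
      rw [Finset.card_biUnion]
      · refine Finset.sum_congr rfl fun w _ => ?_
        unfold fib; congr
      · intro w _ w' _ hne
        rw [Function.onFun, Finset.disjoint_left]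
        intro u hu hu'
        rw [Finset.mem_filter] at hu hu'
        exact hne (hS.uniq _ _ _ hu.2 hu'.2)
    rw [e]
    apply Finset.card_le_card
    intro u hu
    simp only [Finset.mem_biUnion, Finset.mem_filter, Finset.mem_Ico] at hu
    obtain ⟨w, hw, hu, hwu⟩ := hu
    rw [Finset.mem_Ico]
    refine ⟨by omega, ?_⟩
    by_contra hcon
    obtain ⟨w', hw', hle⟩ := hS.nest w u y hwu (by omega) (by omega)
    have := h _ hw'
    omega
  rw [Int.card_Ico] at hc
  have : ∑ w ∈ Finset.Ico z (y + 1), (fib N S w : ℤ) ≤ ((y - z).toNat : ℤ) := by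
    exact_mod_cast hc
  omega

lemma IsSrc.uniq {h : ℤ → ℤ} {x x' y : ℤ} (h1 : IsSrc h x y) (h2 : IsSrc h x' y) : x = x' := by
  obtain ⟨a1, b1, c1⟩ := h1
  obtain ⟨a2, b2, c2⟩ := h2
  by_contra hne
  rcases lt_or_gt_of_ne hne with hl | hl
  · have := c1 _ hl a2; omega
  · have := c2 _ hl a1; omega

/-- A nested source system is determined by its fibre sizes. -/
lemma GoodS.iff_isSrc {N : ℤ} {S} (hS : GoodS N S) (x y : ℤ) :
    S x y ↔ IsSrc (hgt (fib N S)) x y := by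
  have fwd : ∀ x, S x y → IsSrc (hgt (fib N S)) x y := fun x h =>
    ⟨hS.le _ _ h, hS.le_hgt h, fun z hz hzy =>
      hS.hgt_lt (fun x' hx' => by rw [hS.uniq _ _ _ hx' h]; exact hz) hzy⟩
  refine ⟨fwd x, fun h => ?_⟩
  by_cases hex : ∃ x', S x' y
  · obtain ⟨x', hx'⟩ := hex
    rwa [(fwd x' hx').uniq h] at hx'
  · have := hS.hgt_lt (z := x) (fun x' hx' => absurd ⟨x', hx'⟩ hex) h.1
    have := h.2.1
    omega

lemma GoodS.fib_per {N : ℤ} {S} (hS : GoodS N S) (x : ℤ) : fib N S (x + N) = fib N S x := by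
  classical
  unfold fib
  symm
  refine Finset.card_bij (fun u _ => u + N) ?_ ?_ ?_
  · intro u hu
    rw [Finset.mem_filter, Finset.mem_Ico] at *
    exact ⟨by omega, (hS.shift _ _).1 hu.2⟩
  · intro a _ b _ hab
    simpa using hab
  · intro u hu
    rw [Finset.mem_filter, Finset.mem_Ico] at hu
    refine ⟨u - N, ?_, by ring⟩
    rw [Finset.mem_filter, Finset.mem_Ico]
    refine ⟨by omega, (hS.shift _ _).2 ?_⟩
    rw [sub_add_cancel]; exact hu.2

lemma GoodS.shiftk {N : ℤ} {S} (hS : GoodS N S) (x y k : ℤ) :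
    S x y ↔ S (x + N * k) (y + N * k) := by
  induction k using Int.induction_on with
  | zero => simp
  | succ i ih =>
    rw [ih, hS.shift, show x + N * (i + 1) = x + N * i + N by ring,
      show y + N * (i + 1) = y + N * i + N by ring]
  | pred i ih =>
    rw [ih, hS.shift (x + N * (-i - 1)), show x + N * (-i - 1) + N = x + N * -i by ring,
      show y + N * (-i - 1) + N = y + N * -i by ring]

lemma mul_small {N : ℤ} (hN : 0 < N) {k : ℤ} (h1 : -N < N * k) (h2 : N * k < N) : k = 0 := by
  have a : -1 < k := by nlinarith
  have b : k < 1 := by nlinarith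
  omega

lemma GoodS.sum_fib_le {N : ℤ} (hN : 0 < N) {S} (hS : GoodS N S) :
    ∑ x ∈ Finset.Ico 0 N, (fib N S x : ℤ) ≤ N := by
  classical
  have e : ∑ w ∈ Finset.Ico 0 N, fib N S w = ((Finset.Ico 0 N).biUnion
      (fun w => (Finset.Ico w (w + N)).filter (fun u => S w u))).card := by
    rw [Finset.card_biUnion]
    · refine Finset.sum_congr rfl fun w _ => ?_
      unfold fib; congr
    · intro w _ w' _ hne
      rw [Function.onFun, Finset.disjoint_left]
      intro u hu hu'
      rw [Finset.mem_filter] at hu hu'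
      exact hne (hS.uniq _ _ _ hu.2 hu'.2)
  have hc : ∑ w ∈ Finset.Ico 0 N, fib N S w ≤ (Finset.Ico 0 N).card := by
    rw [e]
    refine Finset.card_le_card_of_injOn (fun u => u % N) ?_ ?_
    · intro u _
      simp only [Finset.coe_Ico, Set.mem_Ico]
      exact ⟨Int.emod_nonneg _ (by omega), Int.emod_lt_of_pos _ hN⟩
    · intro u hu v hv huv
      simp only [Finset.coe_biUnion, Set.mem_iUnion, Finset.mem_coe, Finset.mem_filter,
        Finset.mem_Ico] at hu hv
      obtain ⟨a, ha, -, hau⟩ := hu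
      obtain ⟨b, hb, -, hbv⟩ := hv
      obtain ⟨k, hk⟩ := Int.ModEq.dvd (show u ≡ v [ZMOD N] from huv)
      have h1 := (hS.shiftk a u k).1 hau
      rw [show u + N * k = v by omega] at h1
      have h2 := hS.uniq _ _ _ hbv h1
      have hk0 := mul_small hN (k := k) (by omega) (by omega)
      rw [hk0] at hk
      simp at hk
      omega
  rw [Int.card_Ico] at hc
  have : ∑ w ∈ Finset.Ico 0 N, (fib N S w : ℤ) ≤ ((N - 0).toNat : ℤ) := by
    exact_mod_cast hc
  omega

/-- Conversely, admissible weights give a nested source system. -/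
lemma goodS_isSrc {N : ℤ} (hN : 0 < N) (F : ℤ → ℕ) (hF : ∀ x, F (x + N) = F x)
    (hsum : ∑ x ∈ Finset.Ico 0 N, (F x : ℤ) ≤ N) : GoodS N (IsSrc (hgt F)) := by
  have hc : hgt F N - hgt F 0 ≤ 0 := by
    rw [hgt_sub F 0 N hN.le]; omega
  refine ⟨fun x y h => h.1, ?_, fun x x' y h h' => h.uniq h', ?_, ?_⟩
  · intro x y h
    by_contra hcon
    have h1 := h.2.2 (x + N) (by omega) (by omega)
    have h2 := hgt_per F N hF x
    have := h.2.1
    omega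
  · intro x y z h hxz hzy
    have hx : hgt F x ≤ hgt F (z + 1) := by
      rcases eq_or_lt_of_le hzy with rfl | hlt
      · exact h.2.1
      · have := h.2.2 (z + 1) (by omega) (by omega)
        have := h.2.1
        omega
    obtain ⟨w, ⟨hw1, hw2⟩, hw3⟩ := Int.exists_greatest_of_bdd
      (P := fun w => w ≤ z ∧ hgt F w ≤ hgt F (z + 1)) ⟨z, fun w hw => hw.1⟩ ⟨x, hxz, hx⟩
    refine ⟨w, ⟨hw1, hw2, fun t ht htz => ?_⟩, hw3 x ⟨hxz, hx⟩⟩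
    by_contra hcon
    have := hw3 t ⟨htz, by omega⟩
    omega
  · intro x y
    have hp := hgt_per F N hF
    unfold IsSrc
    have e1 := hp x
    have e2 := hp (y + 1)
    rw [show y + 1 + N = y + N + 1 by ring] at e2
    constructor
    · rintro ⟨a, b, c⟩
      refine ⟨by omega, by omega, fun z h1 h2 => ?_⟩
      have := c (z - N) (by omega) (by omega)
      have e3 := hp (z - N)
      rw [sub_add_cancel] at e3
      omega
    · rintro ⟨a, b, c⟩
      refine ⟨by omega, by omega, fun z h1 h2 => ?_⟩
      have := c (z + N) (by omega) (by omega)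
      have e3 := hp z
      omega

lemma fib_isSrc {N : ℤ} (hN : 0 < N) (F : ℤ → ℕ) (hF : ∀ x, F (x + N) = F x)
    (hsum : ∑ x ∈ Finset.Ico 0 N, (F x : ℤ) ≤ N) (x : ℤ) : fib N (IsSrc (hgt F)) x = F x := by
  classical
  have hc : hgt F N - hgt F 0 ≤ 0 := by
    rw [hgt_sub F 0 N hN.le]; omega
  have hG := goodS_isSrc hN F hF hsum
  unfold fib
  rw [← Finset.card_range (F x)]
  refine Finset.card_bij (fun u _ => (hgt F (u + 1) - hgt F x).toNat) ?_ ?_ ?_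
  · intro u hu
    rw [Finset.mem_filter, Finset.mem_Ico] at hu
    obtain ⟨hu, h1, h2, h3⟩ := hu
    rw [Finset.mem_range]
    have hs := hgt_succ F x
    rcases eq_or_lt_of_le h1 with rfl | hlt
    · omega
    · have := h3 (x + 1) (by omega) (by omega)
      omega
  · intro u hu v hv huv
    rw [Finset.mem_filter, Finset.mem_Ico] at hu hv
    obtain ⟨hu, h1, h2, h3⟩ := hu
    obtain ⟨hv, g1, g2, g3⟩ := hv
    by_contra hne
    rcases lt_or_gt_of_ne hne with hl | hl
    · have := g3 (u + 1) (by omega) (by omega); omega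
    · have := h3 (v + 1) (by omega) (by omega); omega
  · intro l hl
    rw [Finset.mem_range] at hl
    obtain ⟨u, ⟨hu1, hu2⟩, hu3⟩ := Int.exists_least_of_bdd
      (P := fun u => x ≤ u ∧ hgt F (u + 1) ≤ hgt F x + l) ⟨x, fun w hw => hw.1⟩
      ⟨x + N - 1, by omega, by
        have := hgt_per F N hF x
        rw [sub_add_cancel]; omega⟩
    have hall : ∀ z, x < z → z ≤ u → hgt F x + l < hgt F z := by
      intro z h1 h2
      by_contra hcon
      have := hu3 (z - 1) ⟨by omega, by rw [sub_add_cancel]; omega⟩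
      omega
    have heq : hgt F (u + 1) = hgt F x + l := by
      have hs := hgt_succ F u
      rcases eq_or_lt_of_le hu1 with rfl | hlt
      · omega
      · have := hall u hlt le_rfl
        omega
    have hsrc : IsSrc (hgt F) x u :=
      ⟨hu1, by omega, fun z h1 h2 => by rw [heq]; exact hall z h1 h2⟩
    refine ⟨u, ?_, by rw [heq]; simp⟩
    rw [Finset.mem_filter, Finset.mem_Ico]
    exact ⟨⟨hu1, hG.lt _ _ hsrc⟩, hsrc⟩

/-- Symmetric non-crossing equivalence relations on the universal cover. -/
structure GoodR (N : ℤ) (R : ℤ → ℤ → Prop) : Prop where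
  eqv : Equivalence R
  per : ∀ y k, R y (y + 2 * N * k)
  shift : ∀ y z, R y z ↔ R (y + N) (z + N)
  nc : ∀ a b c d, a < b → b < c → c < d → d < a + 2 * N → R a c → R b d → R a b

/-- Source relation of an equivalence relation. -/
def srcR (N : ℤ) (R : ℤ → ℤ → Prop) (x y : ℤ) : Prop :=
  x ≤ y ∧ y < x + N ∧ R x y ∧ ¬ R x (x + N) ∧ ∀ z, x - N < z → z < x → ¬ R z x

/-- Equivalence relation of a source system. -/
def relS (N : ℤ) (S : ℤ → ℤ → Prop) (y z : ℤ) : Prop :=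
  ((∀ x, ¬ S x y) ∧ (∀ x, ¬ S x z)) ∨ ∃ x k, S x y ∧ S (x + 2 * N * k) z

lemma GoodR.zero_of {N : ℤ} {R} (hR : GoodR N R) {x y : ℤ} (h : R x y) (hx : R x (x + N)) :
    R y (y + N) :=
  hR.eqv.trans (hR.eqv.symm h) (hR.eqv.trans hx ((hR.shift _ _).1 h))

lemma GoodR.per2 {N : ℤ} {R} (hR : GoodR N R) (y : ℤ) : R y (y + 2 * N) := by
  simpa using hR.per y 1

lemma GoodR.span {N : ℤ} {R} (hR : GoodR N R) {z y w : ℤ} (hy : ¬ R y (y + N))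
    (h1 : y - N < z) (h2 : z < y) (h3 : y < w) (h4 : w < y + N) (hz : R z y) (hw : R y w) :
    w < z + N := by
  by_contra hcon
  rcases eq_or_lt_of_le (not_lt.1 hcon) with he | hlt
  · rw [← he] at hw
    exact hy (hR.zero_of hz (hR.eqv.trans hz hw))
  · have hwz : R (w - N) (z + N) := by
      have a : R (w - N) (w + N) := by
        have := hR.per2 (w - N)
        rwa [show w - N + 2 * N = w + N by ring] at this
      refine hR.eqv.trans a ?_
      rw [← hR.shift]
      exact hR.eqv.symm (hR.eqv.trans hz hw)
    have h5 := hR.nc z (w - N) y (z + N) (by omega) (by omega) (by omega) (by omega) hz hwz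
    exact hy (hR.zero_of hz (hR.eqv.trans h5 hwz))

lemma GoodR.exists_src {N : ℤ} (hN : 0 < N) {R} (hR : GoodR N R) {y : ℤ} (hy : ¬ R y (y + N)) :
    ∃ x, srcR N R x y := by
  obtain ⟨x, ⟨hx1, hx2, hx3⟩, hmin⟩ := Int.exists_least_of_bdd
    (P := fun x => y - N < x ∧ x ≤ y ∧ R x y) ⟨y - N, fun w hw => hw.1.le⟩
    ⟨y, by omega, le_rfl, hR.eqv.refl _⟩
  have hx : ¬ R x (x + N) := fun h => hy (hR.zero_of hx3 h)
  refine ⟨x, hx2, by omega, hx3, hx, fun z h1 h2 hz => ?_⟩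
  have hzy := hR.eqv.trans hz hx3
  rcases lt_or_ge (y - N) z with h | h
  · have := hmin z ⟨h, by omega, hzy⟩
    omega
  · have := hR.span hx h1 h2 (w := y) (by omega) (by omega) hz hx3
    have hzN : y = z + N ∨ z + N < y := by omega
    omega

lemma GoodR.goodS {N : ℤ} (hN : 0 < N) {R} (hR : GoodR N R) : GoodS N (srcR N R) := by
  refine ⟨fun x y h => h.1, fun x y h => h.2.1, ?_, ?_, ?_⟩
  · intro x x' y h h'
    have hxx : R x x' := hR.eqv.trans h.2.2.1 (hR.eqv.symm h'.2.2.1)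
    have a1 := h.1
    have a2 := h.2.1
    have b1 := h'.1
    have b2 := h'.2.1
    by_contra hne
    rcases lt_or_gt_of_ne hne with hl | hl
    · exact h'.2.2.2.2 x (by omega) hl hxx
    · exact h.2.2.2.2 x' (by omega) hl (hR.eqv.symm hxx)
  · intro x y z h hxz hzy
    obtain ⟨h1, h2, h3, h4, h5⟩ := h
    by_cases hz : R x z
    · exact ⟨x, ⟨hxz, by omega, hz, h4, h5⟩, le_rfl⟩
    · have hxz' : x ≠ z := fun e => hz (e ▸ hR.eqv.refl _)
      have hzy' : z ≠ y := fun e => hz (e ▸ h3)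
      have hzz : ¬ R z (z + N) := fun hzz =>
        hz (hR.nc x z y (z + N) (by omega) (by omega) (by omega) (by omega) h3 hzz)
      obtain ⟨w, hw⟩ := hR.exists_src hN hzz
      refine ⟨w, hw, ?_⟩
      by_contra hcon
      obtain ⟨w1, w2, w3, w4, w5⟩ := hw
      have := hR.nc w x z y (by omega) (by omega) (by omega) (by omega) w3 h3
      exact hz (hR.eqv.trans (hR.eqv.symm this) w3)
  · intro x y
    unfold srcR
    rw [← hR.shift x y, ← hR.shift x (x + N)]
    constructor
    · rintro ⟨h1, h2, h3, h4, h5⟩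
      refine ⟨by omega, by omega, h3, h4, fun z a b hz => h5 (z - N) (by omega) (by omega) ?_⟩
      rw [hR.shift, sub_add_cancel]; exact hz
    · rintro ⟨h1, h2, h3, h4, h5⟩
      refine ⟨by omega, by omega, h3, h4, fun z a b hz =>
        h5 (z + N) (by omega) (by omega) ((hR.shift _ _).1 hz)⟩

lemma GoodR.zero_rel {N : ℤ} (hN : 0 < N) {R} (hR : GoodR N R) {y z : ℤ} (hy : R y (y + N))
    (hz : R z (z + N)) : R y z := by
  obtain ⟨k, z', hz', h1, h2⟩ : ∃ k z', z' = z + 2 * N * k ∧ y ≤ z' ∧ z' < y + 2 * N := by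
    refine ⟨-((z - y) / (2 * N)), _, rfl, ?_, ?_⟩
    · have := Int.emod_nonneg (z - y) (show (2 * N) ≠ 0 by omega)
      have := Int.mul_ediv_add_emod (z - y) (2 * N)
      rw [mul_neg]; omega
    · have := Int.emod_lt_of_pos (z - y) (show 0 < (2 * N) by omega)
      have := Int.mul_ediv_add_emod (z - y) (2 * N)
      rw [mul_neg]; omega
  have hzz : R z z' := hz' ▸ hR.per z k
  have hz'N := hR.zero_of hzz hz
  refine hR.eqv.trans ?_ (hR.eqv.symm hzz)
  clear hz'
  rcases eq_or_lt_of_le h1 with rfl | h1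
  · exact hR.eqv.refl _
  rcases lt_trichotomy z' (y + N) with h | h | h
  · exact hR.nc y z' (y + N) (z' + N) h1 h (by omega) (by omega) hy hz'N
  · rw [h]; exact hy
  · have h3 : R (z' - N) z' := by
      have := (hR.shift (z' - N) z').2 (by rw [sub_add_cancel]; exact hz'N)
      exact this
    exact hR.eqv.trans (hR.nc y (z' - N) (y + N) z' (by omega) (by omega) (by omega) (by omega)
      hy h3) h3

lemma GoodR.iff_relS {N : ℤ} (hN : 0 < N) {R} (hR : GoodR N R) (y z : ℤ) :
    R y z ↔ relS N (srcR N R) y z := by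
  have hS := hR.goodS hN
  have hno : ∀ y, R y (y + N) → ∀ x, ¬ srcR N R x y := fun y hy x hx =>
    hx.2.2.2.1 (hR.zero_of (hR.eqv.symm hx.2.2.1) hy)
  constructor
  · intro h
    by_cases hy : R y (y + N)
    · exact Or.inl ⟨hno y hy, hno z (hR.zero_of h hy)⟩
    · have hz : ¬ R z (z + N) := fun hz => hy (hR.zero_of (hR.eqv.symm h) hz)
      obtain ⟨x, hx⟩ := hR.exists_src hN hy
      obtain ⟨x', hx'⟩ := hR.exists_src hN hz
      refine Or.inr ⟨x, (x' - x + N) / (2 * N), hx, ?_⟩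
      have e1 := Int.emod_nonneg (x' - x + N) (show (2 * N) ≠ 0 by omega)
      have e2 := Int.emod_lt_of_pos (x' - x + N) (show 0 < (2 * N) by omega)
      have e3 := Int.mul_ediv_add_emod (x' - x + N) (2 * N)
      generalize (x' - x + N) / (2 * N) = k at *
      have hxx : R (x + 2 * N * k) x' :=
        hR.eqv.trans (hR.eqv.symm (hR.per x k)) (hR.eqv.trans hx.2.2.1
          (hR.eqv.trans h (hR.eqv.symm hx'.2.2.1)))
      have hx0 : srcR N R (x + 2 * N * k) (x + 2 * N * k) := by
        have := (hS.shiftk x x (2 * k)).1 (hS.refl hx)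
        rwa [show N * (2 * k) = 2 * N * k by ring] at this
      suffices x + 2 * N * k = x' by rw [this]; exact hx'
      obtain ⟨t, ht⟩ : ∃ t, t = x + 2 * N * k := ⟨_, rfl⟩
      rw [← ht] at hxx hx0 ⊢
      by_contra hne
      rcases lt_or_gt_of_ne hne with hl | hl
      · exact hx'.2.2.2.2 t (by omega) hl hxx
      · rcases eq_or_lt_of_le (show t - N ≤ x' by omega) with he | hlt
        · have : R x' (x' + N) := by
            rw [show x' + N = t by omega]; exact hR.eqv.symm hxx
          exact hx'.2.2.2.1 this
        · exact hx0.2.2.2.2 x' hlt hl (hR.eqv.symm hxx)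
  · rintro (⟨h1, h2⟩ | ⟨x, k, h1, h2⟩)
    · have hy : R y (y + N) := by
        by_contra hy; obtain ⟨x, hx⟩ := hR.exists_src hN hy; exact h1 x hx
      have hz : R z (z + N) := by
        by_contra hy; obtain ⟨x, hx⟩ := hR.exists_src hN hy; exact h2 x hx
      exact hR.zero_rel hN hy hz
    · exact hR.eqv.trans (hR.eqv.symm h1.2.2.1) (hR.eqv.trans (hR.per x k) h2.2.2.1)

lemma GoodS.relS_equiv {N : ℤ} {S} (hS : GoodS N S) : Equivalence (relS N S) := by
  refine ⟨?_, ?_, ?_⟩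
  · intro y
    by_cases h : ∃ x, S x y
    · obtain ⟨x, hx⟩ := h
      exact Or.inr ⟨x, 0, hx, by simpa using hx⟩
    · push Not at h
      exact Or.inl ⟨h, h⟩
  · rintro y z (⟨h1, h2⟩ | ⟨x, k, h1, h2⟩)
    · exact Or.inl ⟨h2, h1⟩
    · refine Or.inr ⟨_, -k, h2, ?_⟩
      rwa [show x + 2 * N * k + 2 * N * -k = x by ring]
  · rintro y z w (⟨h1, h2⟩ | ⟨x, k, h1, h2⟩) (⟨h3, h4⟩ | ⟨x', k', h3, h4⟩)
    · exact Or.inl ⟨h1, h4⟩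
    · exact absurd h3 (h2 _)
    · exact absurd h2 (h3 _)
    · refine Or.inr ⟨x, k + k', h1, ?_⟩
      have := hS.uniq _ _ _ h2 h3
      rwa [show x + 2 * N * (k + k') = x' + 2 * N * k' by rw [← this]; ring]

lemma two_cases {N : ℤ} (hN : 0 < N) {k : ℤ} (h1 : -N < 2 * N * k) (h2 : 2 * N * k < 3 * N) :
    k = 0 ∨ k = 1 := by
  have a : -1 < k := by nlinarith
  have b : k < 2 := by nlinarith
  omega

/-- For points within one period, equivalent points have the same source up to one turn. -/
lemma GoodS.relS_cases {N : ℤ} (hN : 0 < N) {S} (hS : GoodS N S) {a c : ℤ} (h1 : a ≤ c)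
    (h2 : c < a + 2 * N) (h : relS N S a c) :
    ((∀ x, ¬ S x a) ∧ (∀ x, ¬ S x c)) ∨ (∃ x, S x a ∧ S x c) ∨
      ∃ x, S x c ∧ S x (a + 2 * N) := by
  rcases h with h | ⟨x, k, ha, hc⟩
  · exact Or.inl h
  · have := hS.le _ _ ha
    have := hS.lt _ _ ha
    have := hS.le _ _ hc
    have := hS.lt _ _ hc
    rcases two_cases hN (k := k) (by omega) (by omega) with rfl | rfl
    · exact Or.inr (Or.inl ⟨x, ha, by simpa using hc⟩)
    · refine Or.inr (Or.inr ⟨_, hc, ?_⟩)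
      have := (hS.shiftk x a 2).1 ha
      rwa [show N * 2 = 2 * N by ring, show x + 2 * N = x + 2 * N * 1 by ring] at this

lemma GoodS.goodR {N : ℤ} (hN : 0 < N) {S} (hS : GoodS N S) : GoodR N (relS N S) := by
  have hE := hS.relS_equiv
  have hper : ∀ y k, relS N S y (y + 2 * N * k) := by
    intro y k
    by_cases h : ∃ x, S x y
    · obtain ⟨x, hx⟩ := h
      refine Or.inr ⟨x, k, hx, ?_⟩
      have := (hS.shiftk x y (2 * k)).1 hx
      rwa [show N * (2 * k) = 2 * N * k by ring] at this
    · push Not at h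
      refine Or.inl ⟨h, fun x hx => h (x - 2 * N * k) ?_⟩
      rw [hS.shiftk _ _ (2 * k)]
      rwa [show N * (2 * k) = 2 * N * k by ring, sub_add_cancel]
  refine ⟨hE, hper, ?_, ?_⟩
  · intro y z
    have hn : ∀ y, (∀ x, ¬ S x y) ↔ (∀ x, ¬ S x (y + N)) := by
      intro y
      constructor
      · intro h x hx
        refine h (x - N) ?_
        rw [hS.shift, sub_add_cancel]; exact hx
      · intro h x hx
        exact h _ ((hS.shift _ _).1 hx)
    unfold relS
    rw [← hn, ← hn]
    refine or_congr Iff.rfl ⟨?_, ?_⟩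
    · rintro ⟨x, k, h1, h2⟩
      refine ⟨x + N, k, (hS.shift _ _).1 h1, ?_⟩
      rw [show x + N + 2 * N * k = x + 2 * N * k + N by ring]
      exact (hS.shift _ _).1 h2
    · rintro ⟨x, k, h1, h2⟩
      refine ⟨x - N, k, ?_, ?_⟩
      · rw [hS.shift, sub_add_cancel]; exact h1
      · rw [hS.shift, show x - N + 2 * N * k + N = x + 2 * N * k by ring]; exact h2
  · intro a b c d hab hbc hcd hda hac hbd
    have key : ∀ y z, (∃ x, S x y ∧ S x z) → relS N S y z := by
      rintro y z ⟨x, h1, h2⟩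
      exact Or.inr ⟨x, 0, h1, by simpa using h2⟩
    have inter : ∀ p q r t x w, p ≤ q → q ≤ r → r ≤ t → S x p → S x r → S w q → S w t →
        x = w := by
      intro p q r t x w h1 h2 h3 hp hr hq ht
      have l1 := hS.le _ _ hp
      have l2 := hS.le _ _ hq
      obtain ⟨w', hw', hle⟩ := hS.nest x r q hr (by omega) h2
      obtain ⟨x', hx', hle'⟩ := hS.nest w t r ht (by omega) h3
      have := hS.uniq _ _ _ hw' hq
      have := hS.uniq _ _ _ hx' hr
      omega
    have lift : ∀ p r q, p ≤ q → q ≤ r → (∃ x, S x p ∧ S x r) → ∃ w, S w q := by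
      rintro p r q h1 h2 ⟨x, hp, hr⟩
      have l1 := hS.le _ _ hp
      obtain ⟨w', hw', -⟩ := hS.nest x r q hr (by omega) h2
      exact ⟨w', hw'⟩
    have up : ∀ x y, S x y → S (x + 2 * N) (y + 2 * N) := by
      intro x y h
      have := (hS.shiftk x y 2).1 h
      rwa [show N * 2 = 2 * N by ring] at this
    have hbb : relS N S b (b + 2 * N) := by simpa using hper b 1
    have haa : relS N S a (a + 2 * N) := by simpa using hper a 1
    rcases hS.relS_cases hN (by omega) (by omega) hac with ⟨a0, c0⟩ | ⟨x, xa, xc⟩ | ⟨x, xc, xa⟩ <;>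
    rcases hS.relS_cases hN (by omega) (by omega) hbd with ⟨b0, d0⟩ | ⟨w, wb, wd⟩ | ⟨w, wd, wb⟩
    · exact Or.inl ⟨a0, b0⟩
    · obtain ⟨t, ht⟩ := lift b d c (by omega) (by omega) ⟨w, wb, wd⟩
      exact absurd ht (c0 t)
    · obtain ⟨t, ht⟩ := lift d (b + 2 * N) (a + 2 * N) (by omega) (by omega) ⟨w, wd, wb⟩
      refine absurd ?_ (a0 (t - 2 * N))
      rw [hS.shiftk _ _ 2, show N * 2 = 2 * N by ring, sub_add_cancel]
      exact ht
    · obtain ⟨t, ht⟩ := lift a c b (by omega) (by omega) ⟨x, xa, xc⟩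
      exact absurd ht (b0 t)
    · have := inter a b c d x w (by omega) (by omega) (by omega) xa xc wb wd
      exact key _ _ ⟨x, xa, this ▸ wb⟩
    · have := inter d (a + 2 * N) (b + 2 * N) (c + 2 * N) w (x + 2 * N) (by omega) (by omega)
        (by omega) wd wb (up _ _ xa) (up _ _ xc)
      exact hE.trans haa (hE.trans (key _ _ ⟨w, this ▸ up _ _ xa, wb⟩) (hE.symm hbb))
    · obtain ⟨t, ht⟩ := lift c (a + 2 * N) d (by omega) (by omega) ⟨x, xc, xa⟩
      exact absurd ht (d0 t)
    · have := inter b c d (a + 2 * N) w x (by omega) (by omega) (by omega) wb wd xc xa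
      exact hE.trans haa (key _ _ ⟨x, xa, this ▸ wb⟩)
    · have := inter c d (a + 2 * N) (b + 2 * N) x w (by omega) (by omega) (by omega) xc xa wd wb
      exact hE.trans haa (hE.trans (key _ _ ⟨x, xa, this ▸ wb⟩) (hE.symm hbb))

lemma GoodS.srcR_relS {N : ℤ} (hN : 0 < N) {S} (hS : GoodS N S) (x y : ℤ) :
    srcR N (relS N S) x y ↔ S x y := by
  have small : ∀ {k : ℤ}, -(2 * N) < 2 * N * k → 2 * N * k < 2 * N → k = 0 :=
    fun {k} h1 h2 => mul_small (N := 2 * N) (by omega) h1 h2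
  constructor
  · rintro ⟨h1, h2, h3, h4, h5⟩
    have hne : ∃ w, S w x := by
      by_contra hcon
      push Not at hcon
      refine h4 (Or.inl ⟨hcon, fun w hw => hcon (w - N) ?_⟩)
      rw [hS.shift, sub_add_cancel]; exact hw
    obtain ⟨w, hw⟩ := hne
    have l1 := hS.le _ _ hw
    have l2 := hS.lt _ _ hw
    rcases eq_or_lt_of_le l1 with rfl | hlt
    · rcases h3 with ⟨h3, -⟩ | ⟨t, k, h6, h7⟩
      · exact absurd hw (h3 _)
      · obtain rfl := hS.uniq _ _ _ hw h6
        have l3 := hS.le _ _ h7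
        have l4 := hS.lt _ _ h7
        obtain rfl := small (k := k) (by omega) (by omega)
        simpa using h7
    · exact absurd (Or.inr ⟨w, 0, hS.refl hw, by simpa using hw⟩) (h5 w (by omega) hlt)
  · intro h
    have hx := hS.refl h
    have l1 := hS.le _ _ h
    have l2 := hS.lt _ _ h
    refine ⟨l1, l2, Or.inr ⟨x, 0, hx, by simpa using h⟩, ?_, ?_⟩
    · rintro (⟨h1, -⟩ | ⟨t, k, h1, h2⟩)
      · exact h1 _ hx
      · obtain rfl := hS.uniq _ _ _ hx h1
        have := hS.uniq _ _ _ h2 ((hS.shift _ _).1 hx)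
        have hk := small (k := k) (by omega) (by omega)
        rw [hk] at this
        simp at this
        omega
    · rintro z a b (⟨-, h1⟩ | ⟨t, k, h1, h2⟩)
      · exact h1 _ hx
      · have := hS.uniq _ _ _ h2 hx
        have l3 := hS.le _ _ h1
        have l4 := hS.lt _ _ h1
        have hk := mul_small (N := 2 * N) (k := k) (by omega) (by omega) (by omega)
        rw [hk] at this
        simp at this
        omega

/-- Reduction of an integer modulo `2N`. -/
def tf (N : ℕ) (hN : 0 < N) (y : ℤ) : Fin (2 * N) :=
  ⟨(y % (2 * (N : ℤ))).toNat, by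
    have := Int.emod_nonneg y (show (2 * (N : ℤ)) ≠ 0 by omega)
    have := Int.emod_lt_of_pos y (show 0 < (2 * (N : ℤ)) by omega)
    omega⟩

lemma tf_val (N : ℕ) (hN : 0 < N) (y : ℤ) : ((tf N hN y).val : ℤ) = y % (2 * (N : ℤ)) := by
  have := Int.emod_nonneg y (show (2 * (N : ℤ)) ≠ 0 by omega)
  simp only [tf]
  omega

lemma tf_eq_iff (N : ℕ) (hN : 0 < N) (y z : ℤ) :
    tf N hN y = tf N hN z ↔ ∃ k, z = y + 2 * (N : ℤ) * k := by
  have h : tf N hN y = tf N hN z ↔ y ≡ z [ZMOD 2 * (N : ℤ)] := by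
    rw [Fin.ext_iff, ← Int.natCast_inj, tf_val, tf_val]; rfl
  rw [h, Int.modEq_iff_dvd]
  constructor
  · rintro ⟨k, hk⟩; exact ⟨k, by omega⟩
  · rintro ⟨k, hk⟩; exact ⟨k, by omega⟩

lemma tf_add (N : ℕ) (hN : 0 < N) (y k : ℤ) : tf N hN (y + 2 * (N : ℤ) * k) = tf N hN y :=
  ((tf_eq_iff N hN _ _).2 ⟨k, rfl⟩).symm

lemma tf_coe (N : ℕ) (hN : 0 < N) (i : Fin (2 * N)) : tf N hN (i.val : ℤ) = i := by
  have := tf_val N hN (i.val : ℤ)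
  have hi := i.isLt
  rw [Int.emod_eq_of_lt (by omega) (by omega)] at this
  apply Fin.ext
  omega

lemma tf_small (N : ℕ) (hN : 0 < N) (y : ℤ) (h1 : 0 ≤ y) (h2 : y < 2 * N) :
    ((tf N hN y).val : ℤ) = y := by
  rw [tf_val, Int.emod_eq_of_lt h1 h2]

lemma tf_big (N : ℕ) (hN : 0 < N) (y : ℤ) (h1 : 2 * N ≤ y) (h2 : y < 4 * N) :
    ((tf N hN y).val : ℤ) = y - 2 * N := by
  rw [← tf_add N hN y (-1), tf_small _ _ _ (by omega) (by omega)]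
  ring

lemma tf_rep (N : ℕ) (hN : 0 < N) (i : Fin (2 * N)) (t : ℤ) :
    ∃ u, t ≤ u ∧ u < t + 2 * N ∧ tf N hN u = i := by
  refine ⟨i.val + 2 * (N : ℤ) * -((i.val - t) / (2 * (N : ℤ))), ?_, ?_, ?_⟩
  · have := Int.emod_nonneg (i.val - t) (show (2 * (N : ℤ)) ≠ 0 by omega)
    have := Int.mul_ediv_add_emod (i.val - t) (2 * (N : ℤ))
    rw [mul_neg]; omega
  · have := Int.emod_lt_of_pos (i.val - t) (show 0 < (2 * (N : ℤ)) by omega)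
    have := Int.mul_ediv_add_emod (i.val - t) (2 * (N : ℤ))
    rw [mul_neg]; omega
  · rw [tf_add, tf_coe]

lemma negB_tf (N : ℕ) (hN : 0 < N) (y : ℤ) : negB N (tf N hN y) = tf N hN (y + N) := by
  apply Fin.ext
  rw [← Int.natCast_inj, tf_val]
  simp only [negB]
  push_cast
  rw [tf_val, Int.emod_add_emod]

/-- The lift to the integers of the relation of being in the same block. -/
def Rz (N : ℕ) (hN : 0 < N) (P : Finpartition (Finset.univ : Finset (Fin (2 * N)))) (y z : ℤ) :
    Prop := P.part (tf N hN y) = P.part (tf N hN z)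

lemma nc_part {M : ℕ} {P : Finpartition (Finset.univ : Finset (Fin M))} (h : IsNoncrossing P)
    {a b c d : Fin M} (hab : a < b) (hbc : b < c) (hcd : c < d) (h1 : P.part a = P.part c)
    (h2 : P.part b = P.part d) : P.part a = P.part b := by
  refine h _ (by simp) _ (by simp) a b c d hab hbc hcd (by simp) ?_ (by simp) ?_
  · rw [h1]; simp
  · rw [h2]; simp

lemma goodR_Rz (N : ℕ) (hN : 0 < N) (P : Finpartition (Finset.univ : Finset (Fin (2 * N))))
    (h1 : IsNoncrossing P) (h2 : ∀ B ∈ P.parts, B.image (negB N) ∈ P.parts) :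
    GoodR N (Rz N hN P) := by
  have hsh : ∀ y z, Rz N hN P y z → Rz N hN P (y + N) (z + N) := by
    intro y z h
    unfold Rz at *
    have e1 : ∀ w, P.part (tf N hN (w + N)) = (P.part (tf N hN w)).image (negB N) := by
      intro w
      apply P.part_eq_of_mem (h2 _ (by simp))
      rw [← negB_tf]
      exact Finset.mem_image_of_mem _ (by simp)
    rw [e1, e1, h]
  refine ⟨⟨fun _ => rfl, fun h => h.symm, fun h h' => h.trans h'⟩, ?_, ?_, ?_⟩
  · intro y k
    unfold Rz
    rw [tf_add]
  · intro y z
    refine ⟨hsh y z, fun h => ?_⟩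
    have := hsh _ _ h
    unfold Rz at *
    have e : ∀ y : ℤ, y + N + N = y + 2 * (N : ℤ) * 1 := fun y => by ring
    rwa [e, e, tf_add, tf_add] at this
  · have main : ∀ a b c d : ℤ, 0 ≤ a → a < 2 * N → a < b → b < c → c < d → d < a + 2 * N →
        Rz N hN P a c → Rz N hN P b d → Rz N hN P a b := by
      intro a b c d ha0 ha hab hbc hcd hda hac hbd
      unfold Rz at *
      have va := tf_small N hN a ha0 ha
      rcases lt_or_ge d (2 * N) with hd | hd
      · have vb := tf_small N hN b (by omega) (by omega)
        have vc := tf_small N hN c (by omega) (by omega)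
        have vd := tf_small N hN d (by omega) (by omega)
        exact nc_part h1 (Fin.lt_def.2 (by omega)) (Fin.lt_def.2 (by omega))
          (Fin.lt_def.2 (by omega)) hac hbd
      have vd := tf_big N hN d (by omega) (by omega)
      rcases lt_or_ge c (2 * N) with hc | hc
      · have vb := tf_small N hN b (by omega) (by omega)
        have vc := tf_small N hN c (by omega) (by omega)
        have := nc_part h1 (a := tf N hN d) (b := tf N hN a) (c := tf N hN b) (d := tf N hN c)
          (Fin.lt_def.2 (by omega)) (Fin.lt_def.2 (by omega))
          (Fin.lt_def.2 (by omega)) hbd.symm hac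
        exact (hbd.trans this).symm
      have vc := tf_big N hN c (by omega) (by omega)
      rcases lt_or_ge b (2 * N) with hb | hb
      · have vb := tf_small N hN b (by omega) (by omega)
        have := nc_part h1 (a := tf N hN c) (b := tf N hN d) (c := tf N hN a) (d := tf N hN b)
          (Fin.lt_def.2 (by omega)) (Fin.lt_def.2 (by omega))
          (Fin.lt_def.2 (by omega)) hac.symm hbd.symm
        exact hac.trans (this.trans hbd.symm)
      have vb := tf_big N hN b (by omega) (by omega)
      have := nc_part h1 (a := tf N hN b) (b := tf N hN c) (c := tf N hN d) (d := tf N hN a)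
          (Fin.lt_def.2 (by omega)) (Fin.lt_def.2 (by omega))
          (Fin.lt_def.2 (by omega)) hbd hac.symm
      exact hac.trans this.symm
    intro a b c d hab hbc hcd hda hac hbd
    have e1 := Int.emod_nonneg a (show (2 * (N : ℤ)) ≠ 0 by omega)
    have e2 := Int.emod_lt_of_pos a (show 0 < (2 * (N : ℤ)) by omega)
    have e3 := Int.mul_ediv_add_emod a (2 * (N : ℤ))
    have e4 : 2 * (N : ℤ) * -(a / (2 * (N : ℤ))) = -(2 * (N : ℤ) * (a / (2 * (N : ℤ)))) := by ring
    have := main (a + 2 * (N : ℤ) * -(a / (2 * (N : ℤ)))) (b + 2 * (N : ℤ) * -(a / (2 * (N : ℤ))))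
      (c + 2 * (N : ℤ) * -(a / (2 * (N : ℤ)))) (d + 2 * (N : ℤ) * -(a / (2 * (N : ℤ))))
      (by omega) (by omega) (by omega) (by omega) (by omega) (by omega)
      (by unfold Rz at *; rwa [tf_add, tf_add]) (by unfold Rz at *; rwa [tf_add, tf_add])
    unfold Rz at *
    rwa [tf_add, tf_add] at this

lemma Rz_inj (N : ℕ) (hN : 0 < N) (P Q : Finpartition (Finset.univ : Finset (Fin (2 * N))))
    (h : ∀ y z, Rz N hN P y z ↔ Rz N hN Q y z) : P = Q := by
  have hp : ∀ i, P.part i = Q.part i := by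
    intro i
    ext j
    rw [P.mem_part_iff_part_eq_part (by simp) (by simp),
      Q.mem_part_iff_part_eq_part (by simp) (by simp)]
    have := h j i
    unfold Rz at this
    rwa [tf_coe, tf_coe] at this
  apply Finpartition.ext
  ext B
  constructor
  · intro hB
    obtain ⟨i, hi⟩ := P.nonempty_of_mem_parts hB
    rw [← P.part_eq_of_mem hB hi, hp]; simp
  · intro hB
    obtain ⟨i, hi⟩ := Q.nonempty_of_mem_parts hB
    rw [← Q.part_eq_of_mem hB hi, ← hp]; simp

lemma exists_P (N : ℕ) (hN : 0 < N) (R : ℤ → ℤ → Prop) (hR : GoodR N R) :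
    ∃ P : Finpartition (Finset.univ : Finset (Fin (2 * N))), (∀ y z, Rz N hN P y z ↔ R y z) ∧
      IsNoncrossing P ∧ ∀ B ∈ P.parts, B.image (negB N) ∈ P.parts := by
  classical
  let st : Setoid (Fin (2 * N)) := ⟨fun i j => R (i.val : ℤ) (j.val : ℤ),
    ⟨fun _ => hR.eqv.refl _, fun h => hR.eqv.symm h, fun h h' => hR.eqv.trans h h'⟩⟩
  let P := Finpartition.ofSetoid st
  have hcl : ∀ y, R ((tf N hN y).val : ℤ) y := by
    intro y
    obtain ⟨k, hk⟩ := (tf_eq_iff N hN ((tf N hN y).val : ℤ) y).1 (tf_coe N hN _)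
    have := hR.per ((tf N hN y).val : ℤ) k
    rwa [← hk] at this
  have hRz : ∀ y z, Rz N hN P y z ↔ R y z := by
    intro y z
    unfold Rz
    rw [← P.mem_part_iff_part_eq_part (by simp) (by simp), Finpartition.mem_part_ofSetoid_iff_rel]
    change R _ _ ↔ _
    constructor
    · intro h
      exact hR.eqv.trans (hR.eqv.symm (hcl y)) (hR.eqv.trans (hR.eqv.symm h) (hcl z))
    · intro h
      exact hR.eqv.trans (hcl z) (hR.eqv.trans (hR.eqv.symm h) (hR.eqv.symm (hcl y)))
  have hpart : ∀ i j, P.part i = P.part j ↔ R (i.val : ℤ) (j.val : ℤ) := by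
    intro i j
    have := hRz i.val j.val
    unfold Rz at this
    rwa [tf_coe, tf_coe] at this
  refine ⟨P, hRz, ?_, ?_⟩
  · intro B hB C hC a b c d hab hbc hcd ha hc hb hd
    rw [← P.part_eq_of_mem hB ha, ← P.part_eq_of_mem hC hb, hpart]
    have h1 := (P.part_eq_of_mem hB ha).trans (P.part_eq_of_mem hB hc).symm
    have h2 := (P.part_eq_of_mem hC hb).trans (P.part_eq_of_mem hC hd).symm
    rw [hpart] at h1 h2
    have := d.isLt
    have := Fin.lt_def.1 hab
    have := Fin.lt_def.1 hbc
    have := Fin.lt_def.1 hcd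
    exact hR.nc _ _ _ _ (by omega) (by omega) (by omega) (by omega) h1 h2
  · intro B hB
    obtain ⟨i, hi⟩ := P.nonempty_of_mem_parts hB
    have hBi := P.part_eq_of_mem hB hi
    have : B.image (negB N) = P.part (tf N hN (i.val + N)) := by
      ext j
      rw [P.mem_part_iff_part_eq_part (by simp) (by simp), Finset.mem_image]
      constructor
      · rintro ⟨a, ha, rfl⟩
        have e : negB N a = tf N hN (a.val + N) := by rw [← negB_tf, tf_coe]
        rw [e]
        change Rz N hN P _ _
        rw [hRz, ← hR.shift, ← hpart]
        exact (P.part_eq_of_mem hB ha).trans hBi.symm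
      · intro h
        refine ⟨tf N hN (j.val + N), ?_, ?_⟩
        · rw [← P.part_eq_iff_mem hB, ← hBi, ← tf_coe N hN i]
          change Rz N hN P _ _
          rw [hRz, hR.shift]
          have h3 : Rz N hN P (j.val) (i.val + N) := by unfold Rz; rwa [tf_coe]
          rw [hRz] at h3
          refine hR.eqv.trans (hR.eqv.symm ?_) h3
          have := hR.per2 (j.val : ℤ)
          rwa [show (j.val : ℤ) + 2 * N = j.val + N + N by ring] at this
        · rw [negB_tf, show (j.val : ℤ) + N + N = j.val + 2 * (N : ℤ) * 1 by ring, tf_add, tf_coe]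
    rw [this]; simp

lemma card_part (N : ℕ) (hN : 0 < N) (P : Finpartition (Finset.univ : Finset (Fin (2 * N))))
    (hR : GoodR N (Rz N hN P)) (x : ℤ) (hx : srcR N (Rz N hN P) x x) :
    fib N (srcR N (Rz N hN P)) x = (P.part (tf N hN x)).card := by
  classical
  obtain ⟨-, -, -, h4, h5⟩ := hx
  unfold fib
  refine Finset.card_bij (fun u _ => tf N hN u) ?_ ?_ ?_
  · intro u hu
    rw [Finset.mem_filter, Finset.mem_Ico] at hu
    rw [P.mem_part_iff_part_eq_part (by simp) (by simp)]
    exact hu.2.2.2.1.symm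
  · intro u hu v hv huv
    rw [Finset.mem_filter, Finset.mem_Ico] at hu hv
    obtain ⟨k, hk⟩ := (tf_eq_iff N hN u v).1 huv
    have := mul_small (N := 2 * (N : ℤ)) (k := k) (by omega) (by omega) (by omega)
    rw [this] at hk
    simp at hk
    omega
  · intro j hj
    rw [P.mem_part_iff_part_eq_part (by simp) (by simp)] at hj
    obtain ⟨u, hu1, hu2, rfl⟩ := tf_rep N hN j (x - N)
    have hj' : Rz N hN P u x := hj
    have hxu : x ≤ u := by
      by_contra hcon
      rcases eq_or_lt_of_le hu1 with he | hlt
      · rw [hR.shift, ← he, sub_add_cancel] at hj'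
        exact h4 hj'
      · exact h5 u hlt (by omega) hj'
    refine ⟨u, ?_, rfl⟩
    rw [Finset.mem_filter, Finset.mem_Ico]
    exact ⟨⟨hxu, by omega⟩, hxu, by omega, hj'.symm, h4, h5⟩

lemma pos_iff (N : ℕ) (hN : 0 < N) (P : Finpartition (Finset.univ : Finset (Fin (2 * N))))
    (hR : GoodR N (Rz N hN P)) (h0 : 0 < 2 * N) :
    (∃ B ∈ P.parts, (⟨0, h0⟩ : Fin (2 * N)) ∈ B ∧ ∃ x ∈ B, N ≤ x.val) ↔
      fib N (srcR N (Rz N hN P)) 0 = 0 := by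
  classical
  have hS := hR.goodS (by omega)
  have e0 : (⟨0, h0⟩ : Fin (2 * N)) = tf N hN 0 := by
    apply Fin.ext
    have := tf_small N hN 0 (by omega) (by omega)
    simp only; omega
  have hf : fib N (srcR N (Rz N hN P)) 0 = 0 ↔ ¬ srcR N (Rz N hN P) 0 0 := by
    unfold fib
    rw [Finset.card_eq_zero, Finset.filter_eq_empty_iff]
    constructor
    · intro h
      exact h (by rw [Finset.mem_Ico]; omega)
    · intro h u _ hu
      exact h (hS.refl hu)
  rw [hf, e0]
  constructor
  · rintro ⟨B, hB, h1, x, hx, hNx⟩ ⟨-, -, -, h4, h5⟩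
    have hRx : Rz N hN P x.val 0 := by
      unfold Rz
      rw [tf_coe, P.part_eq_of_mem hB h1, P.part_eq_of_mem hB hx]
    have hxl := x.isLt
    rcases eq_or_lt_of_le hNx with he | hlt
    · rw [← he] at hRx
      exact h4 (by rw [zero_add]; exact hRx.symm)
    · refine h5 (x.val - 2 * N) (by omega) (by omega) ?_
      have := hR.per2 (x.val - 2 * N)
      rw [sub_add_cancel] at this
      exact this.trans hRx
  · intro h
    have : ∃ u : ℤ, N ≤ u ∧ u < 2 * N ∧ Rz N hN P 0 u := by
      by_contra hcon
      push Not at hcon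
      refine h ⟨le_rfl, by omega, rfl, ?_, ?_⟩
      · rw [zero_add]; exact hcon N le_rfl (by omega)
      · intro z h1 h2 hz
        exact hcon (z + 2 * N) (by omega) (by omega) (hz.symm.trans (hR.per2 z))
    obtain ⟨u, h1, h2, h3⟩ := this
    refine ⟨P.part (tf N hN 0), by simp, by simp, tf N hN u, ?_, ?_⟩
    · rw [P.mem_part_iff_part_eq_part (by simp) (by simp)]
      exact h3.symm
    · have := tf_small N hN u (by omega) (by omega)
      omega

/-- Admissible weight functions. -/
def Adm (m N : ℕ) (F : ℤ → ℕ) : Prop :=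
  (∀ x, F (x + N) = F x) ∧ (∀ x, m ∣ F x) ∧ F 0 = 0 ∧ ∑ x ∈ Finset.Ico 0 (N : ℤ), (F x : ℤ) ≤ N

lemma card_eq_adm (m N : ℕ) (hN : 0 < N) (hmN : m ∣ N) (h0 : 0 < 2 * N) :
    Nat.card {P : Finpartition (Finset.univ : Finset (Fin (2 * N))) //
        IsNoncrossing P ∧
        (∀ B ∈ P.parts, B.image (negB N) ∈ P.parts) ∧
        (∀ B ∈ P.parts, m ∣ B.card) ∧
        ∃ B ∈ P.parts, (⟨0, h0⟩ : Fin (2 * N)) ∈ B ∧ ∃ x ∈ B, N ≤ x.val} =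
      Nat.card {F : ℤ → ℕ // Adm m N F} := by
  classical
  have hN' : (0 : ℤ) < N := by omega
  refine Nat.card_congr (Equiv.ofBijective (fun P => ⟨fib N (srcR N (Rz N hN P.1)), ?_⟩) ⟨?_, ?_⟩)
  · obtain ⟨P, h1, h2, h3, h4⟩ := P
    have hR := goodR_Rz N hN P h1 h2
    have hS := hR.goodS hN'
    refine ⟨hS.fib_per, fun x => ?_, (pos_iff N hN P hR h0).1 h4, hS.sum_fib_le hN'⟩
    by_cases hx : srcR N (Rz N hN P) x x
    · rw [card_part N hN P hR x hx]
      exact h3 _ (by simp)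
    · have : fib N (srcR N (Rz N hN P)) x = 0 := by
        unfold fib
        rw [Finset.card_eq_zero, Finset.filter_eq_empty_iff]
        intro u _ hu
        exact hx (hS.refl hu)
      simp only [this, dvd_zero]
  · rintro ⟨P, h1, h2, h3, h4⟩ ⟨Q, g1, g2, g3, g4⟩ h
    have hR := goodR_Rz N hN P h1 h2
    have hR' := goodR_Rz N hN Q g1 g2
    have h' : fib N (srcR N (Rz N hN P)) = fib N (srcR N (Rz N hN Q)) := congrArg Subtype.val h
    apply Subtype.ext
    apply Rz_inj N hN
    intro y z
    have hs : srcR N (Rz N hN P) = srcR N (Rz N hN Q) := by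
      funext x y
      rw [eq_iff_iff, (hR.goodS hN').iff_isSrc, (hR'.goodS hN').iff_isSrc, h']
    rw [hR.iff_relS hN', hR'.iff_relS hN', hs]
  · rintro ⟨F, f1, f2, f3, f4⟩
    have hS := goodS_isSrc hN' F f1 f4
    have hR0 := hS.goodR hN'
    obtain ⟨P, p1, p2, p3⟩ := exists_P N hN _ hR0
    have hRz : Rz N hN P = relS N (IsSrc (hgt F)) := by
      funext y z; rw [eq_iff_iff, p1]
    have hR : GoodR N (Rz N hN P) := hRz ▸ hR0
    have hsrc : srcR N (Rz N hN P) = IsSrc (hgt F) := by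
      funext x y; rw [eq_iff_iff, hRz, hS.srcR_relS hN']
    have hfib : fib N (srcR N (Rz N hN P)) = F := by
      funext x; rw [hsrc, fib_isSrc hN' F f1 f4]
    have hnz : ∀ i, ¬ Rz N hN P (i : Fin (2 * N)).val (i.val + N) → m ∣ (P.part i).card := by
      intro i hi
      obtain ⟨x, hx⟩ := hR.exists_src hN' hi
      have e : P.part i = P.part (tf N hN x) := by
        have := hx.2.2.1.symm
        unfold Rz at this
        rwa [tf_coe] at this
      rw [e, ← card_part N hN P hR x ((hR.goodS hN').refl hx), hfib]
      exact f2 x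
    have hdiv : ∀ B ∈ P.parts, m ∣ B.card := by
      intro B hB
      obtain ⟨i, hi⟩ := P.nonempty_of_mem_parts hB
      have hBi := P.part_eq_of_mem hB hi
      by_cases hz : Rz N hN P i.val (i.val + N)
      · have hsum := P.sum_card_parts
        rw [← Finset.add_sum_erase _ _ hB, Finset.card_univ, Fintype.card_fin] at hsum
        have hoth : m ∣ ∑ C ∈ P.parts.erase B, C.card := by
          refine Finset.dvd_sum fun C hC => ?_
          rw [Finset.mem_erase] at hC
          obtain ⟨j, hj⟩ := P.nonempty_of_mem_parts hC.2
          have hCj := P.part_eq_of_mem hC.2 hj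
          rw [← hCj]
          refine hnz j fun hjz => hC.1 ?_
          rw [← hCj, ← hBi, ← tf_coe N hN i, ← tf_coe N hN j]
          exact hR.zero_rel hN' hjz hz
        refine (Nat.dvd_add_iff_left hoth).2 ?_
        rw [hsum]
        exact hmN.mul_left 2
      · rw [← hBi]; exact hnz i hz
    refine ⟨⟨P, p2, p3, hdiv, (pos_iff N hN P hR h0).2 (by rw [hfib]; exact f3)⟩, ?_⟩
    exact Subtype.ext hfib

lemma card_adm (m n : ℕ) (hm : 0 < m) (hn : 0 < n) :
    Nat.card {F : ℤ → ℕ // Adm m (m * n) F} = Nat.choose (m * n + n - 1) n := by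
  have hN : 0 < m * n := Nat.mul_pos hm hn
  obtain ⟨M, hM⟩ : ∃ M, m * n = M + 1 := ⟨m * n - 1, by omega⟩
  have hsum : ∀ F : ℤ → ℕ, F 0 = 0 → ∑ x ∈ Finset.Ico 0 ((M + 1 : ℕ) : ℤ), (F x : ℤ) =
      ((∑ i : Fin M, F ((i.val : ℤ) + 1) : ℕ) : ℤ) := by
    intro F hF
    have e : ∑ x ∈ Finset.Ico 0 ((M + 1 : ℕ) : ℤ), (F x : ℤ) =
        ∑ i ∈ Finset.range (M + 1), (F (i : ℤ) : ℤ) := by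
      symm
      refine Finset.sum_bij (fun i _ => (i : ℤ)) ?_ ?_ ?_ ?_
      · intro i hi; rw [Finset.mem_range] at hi; rw [Finset.mem_Ico]; omega
      · intro i _ j _ h; exact_mod_cast h
      · intro x hx
        rw [Finset.mem_Ico] at hx
        exact ⟨x.toNat, by rw [Finset.mem_range]; omega, by omega⟩
      · intro i _; rfl
    rw [e, Finset.sum_range_succ', Nat.cast_zero, hF, Finset.sum_range]
    push_cast; ring
  have key : Nat.card {F : ℤ → ℕ // Adm m (m * n) F} =
      Nat.card {g : Fin (M + 1) → ℕ // ∑ i, g i = n} := by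
    rw [hM]
    symm
    have per : ∀ (F : ℤ → ℕ), (∀ x, F (x + (M + 1 : ℕ)) = F x) → ∀ x, F (x % (M + 1 : ℕ)) = F x := by
      intro F hF x
      have h1 : ∀ k : ℤ, ∀ x, F (x + (M + 1 : ℕ) * k) = F x := by
        intro k
        induction k using Int.induction_on with
        | zero => simp
        | succ i ih =>
          intro x
          rw [show x + ((M + 1 : ℕ) : ℤ) * (i + 1) = x + (M + 1 : ℕ) * i + (M + 1 : ℕ) by ring, hF, ih]
        | pred i ih =>
          intro x
          rw [← hF, show x + ((M + 1 : ℕ) : ℤ) * (-i - 1) + (M + 1 : ℕ) = x + (M + 1 : ℕ) * -i by ring,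
            ih]
      rw [← h1 (x / (M + 1 : ℕ)) (x % (M + 1 : ℕ)), Int.emod_add_mul_ediv]
    have hpos : (0 : ℤ) < (M + 1 : ℕ) := by omega
    let G : (Fin (M + 1) → ℕ) → ℤ → ℕ := fun g x =>
      if hx : (x % (M + 1 : ℕ)).toNat = 0 then 0 else
        m * g ⟨(x % (M + 1 : ℕ)).toNat, by have := Int.emod_lt_of_pos x hpos; omega⟩
    have hG0 : ∀ g, G g 0 = 0 := fun g => by simp [G]
    have hG1 : ∀ g (i : Fin M), G g ((i.val : ℤ) + 1) = m * g i.succ := by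
      intro g i
      have hi := i.isLt
      have : ((i.val : ℤ) + 1) % (M + 1 : ℕ) = i.val + 1 :=
        Int.emod_eq_of_lt (by omega) (by omega)
      have h2 : (((i.val : ℤ) + 1) % (M + 1 : ℕ)).toNat = i.val + 1 := by rw [this]; omega
      simp only [G]
      rw [dif_neg (by omega)]
      congr 2
      exact Fin.ext h2
    refine Nat.card_congr (Equiv.ofBijective (fun g => ⟨G g.1, ?_⟩) ⟨?_, ?_⟩)
    · obtain ⟨g, hg⟩ := g
      refine ⟨fun x => ?_, fun x => ?_, hG0 g, ?_⟩
      · simp only [G, Int.add_emod_right]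
      · simp only [G]
        split_ifs
        · exact dvd_zero _
        · exact dvd_mul_right _ _
      · rw [hsum _ (hG0 g)]
        have : ∑ i : Fin M, G g ((i.val : ℤ) + 1) = m * ∑ i : Fin M, g i.succ := by
          rw [Finset.mul_sum]; exact Finset.sum_congr rfl fun i _ => hG1 g i
        rw [Nat.cast_le]
        rw [this, ← hM]
        apply Nat.mul_le_mul_left
        rw [Fin.sum_univ_succ] at hg
        omega
    · rintro ⟨g, hg⟩ ⟨g', hg'⟩ h
      have h' : G g = G g' := congrArg Subtype.val h
      have hs : ∀ i : Fin M, g i.succ = g' i.succ := by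
        intro i
        have := hG1 g i
        rw [h', hG1] at this
        exact (Nat.eq_of_mul_eq_mul_left hm this).symm
      apply Subtype.ext
      funext i
      refine Fin.cases ?_ hs i
      rw [Fin.sum_univ_succ] at hg hg'
      have : ∑ i : Fin M, g i.succ = ∑ i : Fin M, g' i.succ := Finset.sum_congr rfl fun i _ => hs i
      simp only; omega
    · rintro ⟨F, f1, f2, f3, f4⟩
      have f2' := f2
      choose q hq using f2'
      have f4' := f4
      rw [hsum F f3, Nat.cast_le] at f4'
      have hle : ∑ i : Fin M, q ((i.val : ℤ) + 1) ≤ n := by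
        refine Nat.le_of_mul_le_mul_left ?_ hm
        rw [Finset.mul_sum, hM]
        refine le_trans (le_of_eq ?_) f4'
        exact Finset.sum_congr rfl fun i _ => (hq _).symm
      let g : Fin (M + 1) → ℕ := Fin.cons (n - ∑ i : Fin M, q ((i.val : ℤ) + 1))
        (fun i => q ((i.val : ℤ) + 1))
      refine ⟨⟨g, ?_⟩, ?_⟩
      · rw [Fin.sum_univ_succ]
        simp only [g, Fin.cons_zero, Fin.cons_succ]
        omega
      · apply Subtype.ext
        funext x
        change G g x = F x
        have hper : ∀ x, G g (x + (M + 1 : ℕ)) = G g x := fun x => by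
          simp only [G, Int.add_emod_right]
        rw [← per _ hper, ← per F f1]
        have e1 := Int.emod_nonneg x (show ((M + 1 : ℕ) : ℤ) ≠ 0 by omega)
        have e2 := Int.emod_lt_of_pos x hpos
        generalize x % (M + 1 : ℕ) = y at *
        rcases eq_or_lt_of_le e1 with rfl | hlt
        · rw [hG0, f3]
        · have := hG1 g ⟨(y - 1).toNat, by omega⟩
          have hy : (((y - 1).toNat : ℕ) : ℤ) + 1 = y := by omega
          simp only [hy] at this
          rw [this, hq y]
          simp only [g, Fin.cons_succ, hy]
  rw [key, Nat.card_congr (Sym.equivNatSumOfFintype (Fin (M + 1)) n).symm, Nat.card_eq_fintype_card,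
    Sym.card_sym_eq_multichoose, Nat.multichoose_eq, Fintype.card_fin, hM]

lemma hockey (m n : ℕ) (hm : 0 < m) (hn : 2 ≤ n) : Nat.choose ((m + 1) * n - 1) n =
      ∑ a ∈ Finset.range (n + 1), Nat.choose ((m + 1) * n - a - 2) (n - a) := by
  have hmn : n ≤ m * n := Nat.le_mul_of_pos_left n hm
  obtain ⟨r, hr⟩ : ∃ r, m * n = r + 2 := ⟨m * n - 2, by omega⟩
  have e : (m + 1) * n = r + 2 + n := by rw [add_mul, hr, one_mul]
  rw [e, ← Finset.sum_range_reflect]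
  have h : ∀ n, Nat.choose (r + n + 1) n = ∑ j ∈ Finset.range (n + 1), Nat.choose (r + j) j := by
    intro n
    induction n with
    | zero => simp
    | succ k ih =>
      rw [Finset.sum_range_succ, ← ih, show r + (k + 1) + 1 = (r + k + 1) + 1 by ring,
        Nat.choose_succ_succ]
      rfl
  rw [show r + 2 + n - 1 = r + n + 1 by omega, h]
  refine Finset.sum_congr rfl fun j hj => ?_
  rw [Finset.mem_range] at hj
  congr 1 <;> omega

/-- For positive integers `m` and `n` with `n ≥ 2`, the number of positive `m`-divisible
non-crossing partitions of type `B_n` (non-crossing partitions of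
`{1, …, mn, -1, …, -mn}` invariant under `i ↦ -i`, with all block sizes divisible by `m`,
such that the block containing `1` also contains a negative number) equals
`C((m+1)n - 1, n)`, and this equals `∑_{a=0}^{n} C((m+1)n - a - 2, n - a)`. -/
theorem stmt15 (m n : ℕ) (hm : 0 < m) (hn : 2 ≤ n) :
    Nat.card {P : Finpartition (Finset.univ : Finset (Fin (2 * (m * n)))) //
        IsNoncrossing P ∧
        (∀ B ∈ P.parts, B.image (negB (m * n)) ∈ P.parts) ∧
        (∀ B ∈ P.parts, m ∣ B.card) ∧
        ∃ B ∈ P.parts,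
          (⟨0, Nat.mul_pos (by norm_num) (Nat.mul_pos hm (by omega))⟩ :
            Fin (2 * (m * n))) ∈ B ∧
          ∃ x ∈ B, m * n ≤ x.val} =
      Nat.choose ((m + 1) * n - 1) n ∧
    Nat.choose ((m + 1) * n - 1) n =
      ∑ a ∈ Finset.range (n + 1), Nat.choose ((m + 1) * n - a - 2) (n - a) := by
  refine ⟨?_, hockey m n hm hn⟩
  have hN : 0 < m * n := Nat.mul_pos hm (by omega)
  rw [card_eq_adm m (m * n) hN (dvd_mul_right m n), card_adm m n hm (by omega), add_mul, one_mul]
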